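/- arXiv:2201.01685 — 3 statements merged into one kernel-verified Lean document; each statement's English description precedes it below -/
import Mathlib

section
/- Let 𝒩 be a finite set of nodes, 𝒯 a finite set of time steps, and for each n ∈ 𝒩 a neighbor set ω_n ⊆ 𝒩 with m ∈ ω_n ⇔ n ∈ ω_m and n ∉ ω_n. Let real numbers p^{bilateral}_{n,m,t}, z^{bilateral}_{n,m,t}, p^{pool}_{n,t}, z^{pool}_{n,t}, e^{CO2}_n, CAP and prices λ^{bilateral}_{n,m,t}, λ^{grid}_{n,m,t}, λ^{pool}_{n,t}, λ^{CO2} be given. Assume the clearing conditions p^{bilateral}_{n,m,t} = −p^{bilateral}_{m,n,t}, p^{bilateral}_{n,m,t} = z^{bilateral}_{n,m,t}, p^{pool}_{n,t} = z^{pool}_{n,t}, Σ_n e^{CO2}_n = CAP, and assume the bilateral prices are symmetric: λ^{bilateral}_{n,m,t} = λ^{bilateral}_{m,n,t}. Then (i) the total bilateral energy payments vanish: Σ_{t,n,m∈ω_n} λ^{bilateral}_{n,m,t} p^{bilateral}_{n,m,t} = 0; and (ii) the nodes' total trading cost equals the TSO's congestion revenue plus the carbon revenue: Σ_n [ Σ_{t,m∈ω_n}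 (λ^{bilateral}_{n,m,t} + λ^{grid}_{n,m,t}) p^{bilateral}_{n,m,t} + Σ_t λ^{pool}_{n,t} p^{pool}_{n,t} + λ^{CO2} e^{CO2}_n ] = Σ_{t,n} ( Σ_{m∈ω_n} λ^{grid}_{n,m,t} z^{bilateral}_{n,m,t} + λ^{pool}_{n,t} z^{pool}_{n,t} ) + λ^{CO2}·CAP. -/
/-! The bilateral payment `lb n m t * pb n m t` is antisymmetric in the two trading partners, and
the neighbour relation is symmetric, so for each time step the payments over all ordered pairs
equal their own negative and vanish (`sum_neighbors_eq_zero_of_antisymm`). Once these are gone,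
the clearing conditions identify the remaining terms of the nodes' cost with those of the TSO's
revenue and the carbon revenue. -/

/-- Exchanging the roles of the two endpoints shows that the sum equals its own negative. -/
lemma sum_neighbors_eq_zero_of_antisymm {N : Type*} [Fintype N] (ω : N → Finset N)
    (hsym : ∀ n m, m ∈ ω n ↔ n ∈ ω m) (f : N → N → ℝ)
    (hf : ∀ n, ∀ m ∈ ω n, f n m = - f m n) :
    ∑ n, ∑ m ∈ ω n, f n m = 0 := by
  have hswap : ∑ n, ∑ m ∈ ω n, f n m = ∑ m, ∑ n ∈ ω m, f n m :=
    Finset.sum_comm' fun n m => by simp [hsym n m]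
  have hneg : ∑ n, ∑ m ∈ ω n, f n m = - ∑ m, ∑ n ∈ ω m, f n m := by
    simp only [← Finset.sum_neg_distrib]
    exact Finset.sum_congr rfl fun n _ => Finset.sum_congr rfl fun m hm => hf n m hm
  linarith

/-- **Payment-balance identity of the mixed bilateral and pool markets.**
Under the market-clearing conditions (reciprocity `pb n m t = - pb m n t`, trade balances
`pb = zb` and `pp = zp`, carbon cap `∑ n, e n = CAP`) and symmetric bilateral prices
`lb n m t = lb m n t`:
(i) the total bilateral energy payments vanish, and
(ii) the nodes' total trading cost equals the TSO's congestion revenue plus the carbon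
revenue `lc * CAP`. -/
theorem payment_balance_identity
    {N T : Type*} [Fintype N] [Fintype T] (ω : N → Finset N)
    (hsym : ∀ n m, m ∈ ω n ↔ n ∈ ω m) (hirr : ∀ n, n ∉ ω n)
    (pb zb : N → N → T → ℝ) (pp zp : N → T → ℝ) (e : N → ℝ) (CAP : ℝ)
    (lb lg : N → N → T → ℝ) (lp : N → T → ℝ) (lc : ℝ)
    (hrec : ∀ n, ∀ m ∈ ω n, ∀ t, pb n m t = - pb m n t)
    (hzb : ∀ n, ∀ m ∈ ω n, ∀ t, pb n m t = zb n m t)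
    (hzp : ∀ n t, pp n t = zp n t)
    (hcap : (∑ n, e n) = CAP)
    (hlbsym : ∀ n m t, lb n m t = lb m n t) :
    (∑ t, ∑ n, ∑ m ∈ ω n, lb n m t * pb n m t = 0) ∧
    (∑ n, ((∑ t, ∑ m ∈ ω n, (lb n m t + lg n m t) * pb n m t)
        + (∑ t, lp n t * pp n t) + lc * e n)
      = (∑ t, ∑ n, ((∑ m ∈ ω n, lg n m t * zb n m t) + lp n t * zp n t)) + lc * CAP) := by
  have hpay : ∑ t, ∑ n, ∑ m ∈ ω n, lb n m t * pb n m t = 0 :=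
    Finset.sum_eq_zero fun t _ =>
      sum_neighbors_eq_zero_of_antisymm ω hsym (fun n m => lb n m t * pb n m t)
        fun n m hm => by
          rw [hrec n m hm t, hlbsym n m t, mul_neg]
  refine ⟨hpay, ?_⟩
  have hgrid : ∑ t, ∑ n, ∑ m ∈ ω n, lg n m t * pb n m t
      = ∑ t, ∑ n, ∑ m ∈ ω n, lg n m t * zb n m t :=
    Finset.sum_congr rfl fun t _ => Finset.sum_congr rfl fun n _ =>
      Finset.sum_congr rfl fun m hm => by rw [hzb n m hm t]
  simp only [hzp, add_mul, Finset.sum_add_distrib, ← Finset.mul_sum, hcap]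
  -- The nodes' costs are summed node first, the TSO's revenue time first.
  rw [Finset.sum_comm (f := fun n t => ∑ m ∈ ω n, lb n m t * pb n m t),
    Finset.sum_comm (f := fun n t => ∑ m ∈ ω n, lg n m t * pb n m t),
    Finset.sum_comm (f := fun n t => lp n t * zp n t), hpay, hgrid, zero_add]
end

section
/- Consider the paper's full mixed-market model (see context). Suppose the combined primal point (node variables (k, k^{storage}, p, p^{bilateral}, p^{pool}, soc, p^{in}, p^{out}, e^{CO2})_{n∈𝒩}, TSO variables (k_l, z^{bilateral}, z^{pool}, f)) is feasible for the centralized problem (5), and that there exist multipliers λ^{bilateral}_{n,m,t}, λ^{grid}_{n,m,t}, λ^{pool}_{n,t}, λ^{CO2} ∈ ℝ such that this point minimizes the partial Lagrangian — the centralized objective plus Σ_{t,n,m∈ω_n} λ^{bilateral}_{n,m,t}(p^{bilateral}_{n,m,t} + p^{bilateral}_{m,n,t}) + Σ_{t,n,m∈ω_n} λ^{grid}_{n,m,t}(p^{bilateral}_{n,m,t} − z^{bilateral}_{n,m,t}) + Σ_{t,n} λ^{pool}_{n,t}(p^{pool}_{n,t} − z^{pool}_{n,t}) + λ^{CO2}(Σ_n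 e^{CO2}_n − CAP) — over the product of the nodes' feasible sets X_n and the TSO's feasible set Y (i.e., with the clearing constraints relaxed). Define the symmetric equilibrium bilateral prices λ̃^{bilateral}_{n,m,t} := λ^{bilateral}_{n,m,t} + λ^{bilateral}_{m,n,t}. Then the point is a long-term market equilibrium: (i) for every node n, its variables minimize node n's cost F_n + Σ_{t,m∈ω_n}(λ̃^{bilateral}_{n,m,t} + λ^{grid}_{n,m,t}) p^{bilateral}_{n,m,t} + Σ_t λ^{pool}_{n,t} p^{pool}_{n,t} + λ^{CO2} e^{CO2}_n over X_n; (ii) the TSO variables minimize F_{TSO} − Σ_{t,n}(Σ_{m∈ω_n} λ^{grid}_{n,m,t} z^{bilateral}_{n,m,t} + λ^{pool}_{n,t} z^{pool}_{n,t}) over Y; and (iii) all clearing constraints hold, so both market operators' (linear, unconstrained) objectives are identically zero and any prices are optimal for them. -/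
/-!
The partial Lagrangian separates over the agents: up to the constant `lc * CAP` it is the sum of
the nodes' total costs at the symmetrized prices `lb n m t + lb m n t` plus the TSO's total cost
(`Lagr_eq`). The only step that is not plain linearity is that the neighbour relation is
symmetric, so exchanging the roles of `n` and `m` turns the terms `lb n m t * (x m).pb n t`
into `lb m n t * (x n).pb m t` (`sum_omega_swap`). Since the relaxed feasible set is a product,
a minimizer of a separable function minimizes each summand: deviate in one agent's block only
and cancel the rest. The claims on the market operators are immediate from clearing.
-/

/-- Decision variables of a node: generation capacities `kG`, storage conversion
capacities `kSc`, storage (energy) capacities `kstor`, productions `p`, bilateral trades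
`pb` (towards each neighbor), pool trades `pp`, state of charge `soc`, charging `pin`,
discharging `pout`, and carbon permits `e`. -/
structure NodeVars (N G S T : Type*) where
  kG : G → ℝ
  kSc : S → ℝ
  kstor : S → ℝ
  p : G → T → ℝ
  pb : N → T → ℝ
  pp : T → ℝ
  soc : S → T → ℝ
  pin : S → T → ℝ
  pout : S → T → ℝ
  e : ℝ

/-- Decision variables of the TSO: line capacities `kl`, bilateral arbitrage trades `zb`,
pool arbitrage trades `zp`, and line flows `flow`. -/
structure TSOVars (N L T : Type*) where
  kl : L → ℝ
  zb : N → N → T → ℝ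
  zp : N → T → ℝ
  flow : L → T → ℝ

/-- All data of the paper's mixed bilateral/pool market model: communication graph
`omega`, fossil technologies `R`, time predecessor `prev`, annualized costs
`CG i = C_i/A_i` (generation), `CSc i = C_i/A_i` (storage conversion), `CS i = CS_i/A_i`
(storage), variable costs `B`, line costs `CL l = Δ_l C_l/A_l`, externalities
`Ecap`, `Eprod`, product differentiation `Ebil`, demands `D`, availabilities `Eav`,
existing capacities `K`, `KSc`, `Kstor`, `Kl`, storage efficiencies `Hin`, `Hout`,
emission factors `W`, bilateral shares `Phi`, PTDF matrix, and carbon cap `CAP`. -/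
structure MarketData (N G S L T : Type*) where
  omega : N → Finset N
  R : Finset G
  prev : T → T
  CG : G → ℝ
  CSc : S → ℝ
  CS : S → ℝ
  B : G → ℝ
  CL : L → ℝ
  Ecap : G → N → ℝ
  Eprod : G → N → ℝ
  Ebil : N → N → ℝ
  D : N → T → ℝ
  Eav : G → N → T → ℝ
  K : G → N → ℝ
  KSc : S → N → ℝ
  Kstor : S → N → ℝ
  Kl : L → ℝ
  Hin : S → ℝ
  Hout : S → ℝ
  W : G → ℝ
  Phi : N → ℝ
  PTDF : L → N → ℝ
  CAP : ℝ

variable {N G S L T : Type*} [Fintype N] [Fintype G] [Fintype S] [Fintype L] [Fintype T]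

/-- Node `n`'s feasible set `X_n`: bilateral and pool energy balances, generation limits,
storage state-of-charge recursion and limits, charging/discharging limits, and emission
accounting. -/
def NodeFeasible (M : MarketData N G S L T) (n : N) (x : NodeVars N G S T) : Prop :=
  (∀ t, M.Phi n * ((∑ i, x.p i t) - M.D n t + (∑ i, x.pout i t) - (∑ i, x.pin i t))
      = ∑ m ∈ M.omega n, x.pb m t) ∧
  (∀ t, (1 - M.Phi n) * ((∑ i, x.p i t) - M.D n t + (∑ i, x.pout i t) - (∑ i, x.pin i t))
      = x.pp t) ∧
  (∀ i t, 0 ≤ x.p i t ∧ x.p i t ≤ M.Eav i n t * (x.kG i + M.K i n)) ∧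
  (∀ i t, x.soc i t = x.soc i (M.prev t) + M.Hin i * x.pin i t - x.pout i t / M.Hout i) ∧
  (∀ i t, 0 ≤ x.soc i t ∧ x.soc i t ≤ x.kstor i + M.Kstor i n) ∧
  (∀ i t, 0 ≤ x.pout i t ∧ x.pout i t ≤ x.kSc i + M.KSc i n) ∧
  (∀ i t, 0 ≤ x.pin i t ∧ x.pin i t ≤ x.kSc i + M.KSc i n) ∧
  (x.e = ∑ t, ∑ i ∈ M.R, M.W i * x.p i t)

/-- Node `n`'s own (non-trading) cost `F_n`: annualized investment costs, variable costs,
capacity and production externality costs, and product-differentiation costs. -/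
def Fnode (M : MarketData N G S L T) (n : N) (x : NodeVars N G S T) : ℝ :=
  (∑ i, M.CG i * x.kG i) + (∑ i, M.CSc i * x.kSc i) + (∑ i, M.CS i * x.kstor i)
  + (∑ t, ∑ i, M.B i * x.p i t)
  + (∑ i, M.Ecap i n * x.kG i) + (∑ t, ∑ i, M.Eprod i n * x.p i t)
  + (∑ t, ∑ m ∈ M.omega n, M.Ebil n m * |x.pb m t|)

/-- The TSO's feasible set `Y`: PTDF flow definition and line thermal limits. -/
def TSOFeasible (M : MarketData N G S L T) (y : TSOVars N L T) : Prop :=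
  (∀ l t, y.flow l t = ∑ n, M.PTDF l n * ((∑ m ∈ M.omega n, y.zb n m t) + y.zp n t)) ∧
  (∀ l t, -(y.kl l + M.Kl l) ≤ y.flow l t ∧ y.flow l t ≤ y.kl l + M.Kl l)

/-- The TSO's own cost `F_TSO`: annualized line investment costs. -/
def Ftso (M : MarketData N G S L T) (y : TSOVars N L T) : ℝ := ∑ l, M.CL l * y.kl l

/-- The market-clearing constraints: reciprocity of bilateral trades, bilateral and pool
trade balances with the TSO, and the carbon cap. -/
def Clearing (M : MarketData N G S L T) (x : N → NodeVars N G S T)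
    (y : TSOVars N L T) : Prop :=
  (∀ n, ∀ m ∈ M.omega n, ∀ t, (x n).pb m t = - (x m).pb n t) ∧
  (∀ n, ∀ m ∈ M.omega n, ∀ t, (x n).pb m t = y.zb n m t) ∧
  (∀ n t, (x n).pp t = y.zp n t) ∧
  ((∑ n, (x n).e) = M.CAP)

/-- Node `n`'s total cost at prices (`ltil` = symmetric bilateral prices, `lg` grid prices,
`lp` pool prices, `lc` carbon price): own cost plus trading payments. -/
def NodeCost (M : MarketData N G S L T) (n : N) (ltil lg : N → N → T → ℝ)
    (lp : N → T → ℝ) (lc : ℝ) (x : NodeVars N G S T) : ℝ :=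
  Fnode M n x + (∑ t, ∑ m ∈ M.omega n, (ltil n m t + lg n m t) * x.pb m t)
  + (∑ t, lp n t * x.pp t) + lc * x.e

/-- The TSO's total cost: own cost minus congestion revenue. -/
def TSOCost (M : MarketData N G S L T) (lg : N → N → T → ℝ) (lp : N → T → ℝ)
    (y : TSOVars N L T) : ℝ :=
  Ftso M y - ∑ t, ∑ n, ((∑ m ∈ M.omega n, lg n m t * y.zb n m t) + lp n t * y.zp n t)

/-- The partial Lagrangian of the centralized problem (5): the centralized objective plus
the price-weighted clearing-constraint terms, with the clearing constraints relaxed. -/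
def Lagr (M : MarketData N G S L T) (lb lg : N → N → T → ℝ) (lp : N → T → ℝ) (lc : ℝ)
    (x : N → NodeVars N G S T) (y : TSOVars N L T) : ℝ :=
  (∑ n, Fnode M n (x n)) + Ftso M y
  + (∑ t, ∑ n, ∑ m ∈ M.omega n, lb n m t * ((x n).pb m t + (x m).pb n t))
  + (∑ t, ∑ n, ∑ m ∈ M.omega n, lg n m t * ((x n).pb m t - y.zb n m t))
  + (∑ t, ∑ n, lp n t * ((x n).pp t - y.zp n t))
  + lc * ((∑ n, (x n).e) - M.CAP)

/-- A double sum over ordered pairs of neighbours is unchanged when the two nodes of each pair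
exchange roles. -/
lemma sum_omega_swap (M : MarketData N G S L T)
    (hsym : ∀ n m, m ∈ M.omega n ↔ n ∈ M.omega m) (f : N → N → ℝ) :
    ∑ n, ∑ m ∈ M.omega n, f n m = ∑ n, ∑ m ∈ M.omega n, f m n :=
  Finset.sum_comm' fun a b => by simpa using hsym a b

/-- Separation of the partial Lagrangian into the individual total costs of the nodes, at the
symmetrized bilateral prices, and of the TSO. -/
lemma Lagr_eq (M : MarketData N G S L T)
    (hsym : ∀ n m, m ∈ M.omega n ↔ n ∈ M.omega m)
    (lb lg : N → N → T → ℝ) (lp : N → T → ℝ) (lc : ℝ)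
    (x : N → NodeVars N G S T) (y : TSOVars N L T) :
    Lagr M lb lg lp lc x y =
      (∑ n, NodeCost M n (fun a b t => lb a b t + lb b a t) lg lp lc (x n))
        + TSOCost M lg lp y - lc * M.CAP := by
  have hswap : ∀ t, ∑ n, ∑ m ∈ M.omega n, lb n m t * (x m).pb n t
      = ∑ n, ∑ m ∈ M.omega n, lb m n t * (x n).pb m t := fun t =>
    sum_omega_swap M hsym fun n m => lb n m t * (x m).pb n t
  have hnode : ∑ n, ∑ t, ∑ m ∈ M.omega n, ((lb n m t + lb m n t) + lg n m t) * (x n).pb m t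
      = ∑ t, ∑ n, ∑ m ∈ M.omega n, ((lb n m t + lb m n t) + lg n m t) * (x n).pb m t :=
    Finset.sum_comm
  have hpool : ∑ n, ∑ t, lp n t * (x n).pp t = ∑ t, ∑ n, lp n t * (x n).pp t :=
    Finset.sum_comm
  simp only [Lagr, NodeCost, TSOCost, Finset.sum_add_distrib, hnode, hpool]
  simp only [mul_add, add_mul, mul_sub, Finset.sum_add_distrib, Finset.sum_sub_distrib, hswap,
    ← Finset.mul_sum]
  ring

/-- **A centrally feasible minimizer of the partial Lagrangian is a long-term market
equilibrium.** If the combined primal point is feasible for the centralized problem (5)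
and minimizes the partial Lagrangian over the product of the nodes' feasible sets and the
TSO's feasible set, then, with the symmetric equilibrium bilateral prices
`λ̃ n m t = lb n m t + lb m n t`: (i) every node's variables minimize its total cost over
`X_n`; (ii) the TSO's variables minimize its cost minus congestion revenue over `Y`; and
(iii) all clearing constraints hold, so both market operators' (linear, unconstrained)
objectives are identically zero and any prices are optimal for them. -/
theorem lagrangian_minimizer_is_market_equilibrium
    (M : MarketData N G S L T)
    (hsym : ∀ n m, m ∈ M.omega n ↔ n ∈ M.omega m) (hirr : ∀ n, n ∉ M.omega n)
    (hEbil : ∀ n m, 0 ≤ M.Ebil n m) (hEav : ∀ i n t, 0 ≤ M.Eav i n t)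
    (hK : ∀ i n, 0 ≤ M.K i n) (hKSc : ∀ i n, 0 ≤ M.KSc i n)
    (hKstor : ∀ i n, 0 ≤ M.Kstor i n) (hKl : ∀ l, 0 ≤ M.Kl l)
    (hHin : ∀ i, 0 < M.Hin i) (hHout : ∀ i, 0 < M.Hout i) (hW : ∀ i, 0 ≤ M.W i)
    (hPhi : ∀ n, 0 ≤ M.Phi n ∧ M.Phi n ≤ 1)
    (lb lg : N → N → T → ℝ) (lp : N → T → ℝ) (lc : ℝ)
    (x : N → NodeVars N G S T) (y : TSOVars N L T)
    (hxfeas : ∀ n, NodeFeasible M n (x n)) (hyfeas : TSOFeasible M y)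
    (hclear : Clearing M x y)
    (hmin : ∀ (x' : N → NodeVars N G S T) (y' : TSOVars N L T),
      (∀ n, NodeFeasible M n (x' n)) → TSOFeasible M y' →
      Lagr M lb lg lp lc x y ≤ Lagr M lb lg lp lc x' y') :
    (∀ n (x' : NodeVars N G S T), NodeFeasible M n x' →
      NodeCost M n (fun a b t => lb a b t + lb b a t) lg lp lc (x n)
        ≤ NodeCost M n (fun a b t => lb a b t + lb b a t) lg lp lc x') ∧
    (∀ y' : TSOVars N L T, TSOFeasible M y' →
      TSOCost M lg lp y ≤ TSOCost M lg lp y') ∧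
    (Clearing M x y ∧
      (∀ (lb' lg' : N → N → T → ℝ) (lp' : N → T → ℝ),
        (∑ t, ∑ n, ∑ m ∈ M.omega n, lb' n m t * ((x n).pb m t + (x m).pb n t))
          + (∑ t, ∑ n, ∑ m ∈ M.omega n, lg' n m t * ((x n).pb m t - y.zb n m t))
          + (∑ t, ∑ n, lp' n t * ((x n).pp t - y.zp n t)) = 0) ∧
      (∀ lc' : ℝ, lc' * ((∑ n, (x n).e) - M.CAP) = 0)) := by
  classical
  obtain ⟨hrec, hgrid, hpool, hcap⟩ := hclear
  refine ⟨fun n x' hx' => ?_, fun y' hy' => ?_, ⟨hrec, hgrid, hpool, hcap⟩, ?_, ?_⟩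
  · -- Only node `n` deviates; the costs of all other agents cancel.
    have hdev := hmin (Function.update x n x') y (fun k => by
      rcases eq_or_ne k n with rfl | hk
      · simpa using hx'
      · simpa [hk] using hxfeas k) hyfeas
    have hrest : ∑ k ∈ Finset.univ.erase n,
          NodeCost M k (fun a b t => lb a b t + lb b a t) lg lp lc (Function.update x n x' k)
        = ∑ k ∈ Finset.univ.erase n,
          NodeCost M k (fun a b t => lb a b t + lb b a t) lg lp lc (x k) :=
      Finset.sum_congr rfl fun k hk => by
        rw [Function.update_of_ne (Finset.ne_of_mem_erase hk)]
    rw [Lagr_eq M hsym, Lagr_eq M hsym, ← Finset.add_sum_erase _ _ (Finset.mem_univ n),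
      ← Finset.add_sum_erase _ _ (Finset.mem_univ n), hrest, Function.update_self] at hdev
    linarith
  · have hdev := hmin x y' hxfeas hy'
    rw [Lagr_eq M hsym, Lagr_eq M hsym] at hdev
    linarith
  · intro lb' lg' lp'
    have hb : ∑ t, ∑ n, ∑ m ∈ M.omega n, lb' n m t * ((x n).pb m t + (x m).pb n t) = 0 :=
      Finset.sum_eq_zero fun t _ => Finset.sum_eq_zero fun n _ => Finset.sum_eq_zero fun m hm => by
        rw [hrec n m hm t, neg_add_cancel, mul_zero]
    have hg : ∑ t, ∑ n, ∑ m ∈ M.omega n, lg' n m t * ((x n).pb m t - y.zb n m t) = 0 :=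
      Finset.sum_eq_zero fun t _ => Finset.sum_eq_zero fun n _ => Finset.sum_eq_zero fun m hm => by
        rw [hgrid n m hm t, sub_self, mul_zero]
    have hp : ∑ t, ∑ n, lp' n t * ((x n).pp t - y.zp n t) = 0 :=
      Finset.sum_eq_zero fun t _ => Finset.sum_eq_zero fun n _ => by
        rw [hpool n t, sub_self, mul_zero]
    rw [hb, hg, hp]
    norm_num
  · intro lc'
    rw [hcap, sub_self, mul_zero]
end

section
/- Consider the paper's full mixed-market model (see context). Let prices λ̃^{bilateral}_{n,m,t}, λ^{grid}_{n,m,t}, λ^{pool}_{n,t}, λ^{CO2} ∈ ℝ be given with symmetric bilateral prices λ̃^{bilateral}_{n,m,t} = λ̃^{bilateral}_{m,n,t}, and let a primal point (node variables for each n, TSO variables) be a long-term market equilibrium at these prices, i.e.: (i) for every node n its variables minimize node n's total cost F_n + Σ_{t,m∈ω_n}(λ̃^{bilateral}_{n,m,t} + λ^{grid}_{n,m,t}) p^{bilateral}_{n,m,t} + Σ_t λ^{pool}_{n,t} p^{pool}_{n,t} + λ^{CO2} e^{CO2}_n over X_n; (ii) the TSO variables minimize F_{TSO} − Σ_{t,n}(Σ_{m∈ω_n}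 λ^{grid}_{n,m,t} z^{bilateral}_{n,m,t} + λ^{pool}_{n,t} z^{pool}_{n,t}) over Y; and (iii) the clearing constraints hold (p^{bilateral}_{n,m,t} = −p^{bilateral}_{m,n,t}, p^{bilateral}_{n,m,t} = z^{bilateral}_{n,m,t}, p^{pool}_{n,t} = z^{pool}_{n,t}, Σ_n e^{CO2}_n = CAP). Then the combined primal point is an optimal solution of the centralized problem (5): it is feasible and minimizes Σ_n F_n + F_{TSO} over all points in ∏_n X_n × Y satisfying the clearing constraints. -/
variable {N G S L T : Type*} [Fintype N] [Fintype G] [Fintype S] [Fintype L] [Fintype T]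

/-- Swapping the roles of `n` and `m` shows that this sum equals its own negative. -/
lemma sum_bilateral_payments_eq_zero (M : MarketData N G S L T)
    (hsym : ∀ n m, m ∈ M.omega n ↔ n ∈ M.omega m) (ltil : N → N → T → ℝ)
    (hltil : ∀ n m t, ltil n m t = ltil m n t) (x : N → NodeVars N G S T)
    (hrec : ∀ n, ∀ m ∈ M.omega n, ∀ t, (x n).pb m t = -(x m).pb n t) (t : T) :
    ∑ n, ∑ m ∈ M.omega n, ltil n m t * (x n).pb m t = 0 := by
  have hswap : ∑ n, ∑ m ∈ M.omega n, ltil n m t * (x n).pb m t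
      = ∑ m, ∑ n ∈ M.omega m, ltil n m t * (x n).pb m t :=
    Finset.sum_comm' (by simpa using hsym)
  have hneg : ∑ m, ∑ n ∈ M.omega m, ltil n m t * (x n).pb m t
      = -∑ m, ∑ n ∈ M.omega m, ltil m n t * (x m).pb n t := by
    simp only [← Finset.sum_neg_distrib]
    refine Finset.sum_congr rfl fun m _ => Finset.sum_congr rfl fun n hn => ?_
    rw [hltil n m t, hrec m n hn t]
    ring
  linarith

/-- Payment balance: at a cleared point, all trading payments cancel except for the constant
carbon payment. -/
lemma sum_costs_of_clearing (M : MarketData N G S L T)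
    (hsym : ∀ n m, m ∈ M.omega n ↔ n ∈ M.omega m) (ltil lg : N → N → T → ℝ)
    (lp : N → T → ℝ) (lc : ℝ) (hltil : ∀ n m t, ltil n m t = ltil m n t)
    (x : N → NodeVars N G S T) (y : TSOVars N L T) (hclear : Clearing M x y) :
    (∑ n, NodeCost M n ltil lg lp lc (x n)) + TSOCost M lg lp y
      = (∑ n, Fnode M n (x n)) + Ftso M y + lc * M.CAP := by
  obtain ⟨hrec, hzb, hzp, hcap⟩ := hclear
  have hbil : ∑ n, ∑ t, ∑ m ∈ M.omega n, (ltil n m t + lg n m t) * (x n).pb m t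
      = ∑ t, ∑ n, ∑ m ∈ M.omega n, lg n m t * y.zb n m t := by
    rw [Finset.sum_comm]
    refine Finset.sum_congr rfl fun t _ => ?_
    simp only [add_mul, Finset.sum_add_distrib]
    rw [sum_bilateral_payments_eq_zero M hsym ltil hltil x hrec t, zero_add]
    exact Finset.sum_congr rfl fun n _ => Finset.sum_congr rfl fun m hm => by rw [hzb n m hm t]
  have hpool : ∑ n, ∑ t, lp n t * (x n).pp t = ∑ t, ∑ n, lp n t * y.zp n t := by
    rw [Finset.sum_comm]
    simp only [hzp]
  simp only [NodeCost, TSOCost, Finset.sum_add_distrib, ← Finset.mul_sum]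
  rw [hbil, hpool, hcap]
  ring

/-- **A long-term market equilibrium solves the centralized problem (5).**
Given symmetric bilateral prices `ltil`, grid prices `lg`, pool prices `lp` and a carbon
price `lc`, suppose the primal point (node variables `x`, TSO variables `y`) is a
long-term market equilibrium: each node's variables minimize its total cost (own cost plus
trading payments) over its feasible set `X_n`, the TSO's variables minimize its cost minus
congestion revenue over `Y`, and all market-clearing constraints hold. Then the combined
primal point is an optimal solution of the centralized problem: it is feasible and
minimizes the total cost `∑ n, F_n + F_TSO` over all points of `∏ n, X_n × Y` satisfying
the clearing constraints. -/
theorem market_equilibrium_is_centrally_optimal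
    (M : MarketData N G S L T)
    (hsym : ∀ n m, m ∈ M.omega n ↔ n ∈ M.omega m) (hirr : ∀ n, n ∉ M.omega n)
    (hEbil : ∀ n m, 0 ≤ M.Ebil n m) (hEav : ∀ i n t, 0 ≤ M.Eav i n t)
    (hK : ∀ i n, 0 ≤ M.K i n) (hKSc : ∀ i n, 0 ≤ M.KSc i n)
    (hKstor : ∀ i n, 0 ≤ M.Kstor i n) (hKl : ∀ l, 0 ≤ M.Kl l)
    (hHin : ∀ i, 0 < M.Hin i) (hHout : ∀ i, 0 < M.Hout i) (hW : ∀ i, 0 ≤ M.W i)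
    (hPhi : ∀ n, 0 ≤ M.Phi n ∧ M.Phi n ≤ 1)
    (ltil lg : N → N → T → ℝ) (lp : N → T → ℝ) (lc : ℝ)
    (hltil : ∀ n m t, ltil n m t = ltil m n t)
    (x : N → NodeVars N G S T) (y : TSOVars N L T)
    (hxfeas : ∀ n, NodeFeasible M n (x n)) (hyfeas : TSOFeasible M y)
    (hclear : Clearing M x y)
    (hnode : ∀ n (x' : NodeVars N G S T), NodeFeasible M n x' →
      NodeCost M n ltil lg lp lc (x n) ≤ NodeCost M n ltil lg lp lc x')
    (htso : ∀ y' : TSOVars N L T, TSOFeasible M y' →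
      TSOCost M lg lp y ≤ TSOCost M lg lp y') :
    ((∀ n, NodeFeasible M n (x n)) ∧ TSOFeasible M y ∧ Clearing M x y) ∧
    (∀ (x' : N → NodeVars N G S T) (y' : TSOVars N L T),
      (∀ n, NodeFeasible M n (x' n)) → TSOFeasible M y' → Clearing M x' y' →
      (∑ n, Fnode M n (x n)) + Ftso M y ≤ (∑ n, Fnode M n (x' n)) + Ftso M y') := by
  refine ⟨⟨hxfeas, hyfeas, hclear⟩, fun x' y' hx' hy' hclear' => ?_⟩
  have hnodes := Finset.sum_le_sum fun n (_ : n ∈ Finset.univ) => hnode n (x' n) (hx' n)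
  have hgrid := htso y' hy'
  have hbal := sum_costs_of_clearing M hsym ltil lg lp lc hltil x y hclear
  have hbal' := sum_costs_of_clearing M hsym ltil lg lp lc hltil x' y' hclear'
  linarith
end
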